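/- arXiv:0709.4679 — 3 statements merged into one kernel-verified Lean document; each statement's English description precedes it below -/
import Mathlib

section
/- Suppose there exist a sequence ε_n ∈ (0,1] with ε_n → 0 and a sequence ξ_n ∈ E with ξ_n → ξ0 as n → ∞ such that F(ξ_n,ε_n) = 0 for every n. Then M(h0) = 0, that is, (S'(h0))^{-1} π_{1,h0}[Q(ξ0,0) − (P'(ξ0) − I) R_{h0} π_{2,h0} Q(ξ0,0)] = 0 in ℝ^k. -/
open Set Metric Topology Filter

/-
Write a solution `ξ` near `ξ0` as `ξ = S h + y`, with `h` chosen so that `y` is transverse to the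
manifold of fixed points. The linearisation `P'(ξ0) − I` has a left inverse on transverse vectors
and `F(·, 0)` vanishes on the manifold, so strict differentiability gives `y = O(ε)`. The equation
is therefore linear up to an error `o(ε)`; dividing by `ε` and passing to the limit shows that the
whole vector `Q(ξ0,0) − (P'(ξ0) − I) R_{h0} π_{2,h0} Q(ξ0,0)` vanishes, not only its component along
the manifold.
-/

open Asymptotics

section

variable {𝕜 : Type*} [NontriviallyNormedField 𝕜]
  {E : Type*} [NormedAddCommGroup E] [NormedSpace 𝕜 E]
  {F : Type*} [NormedAddCommGroup F] [NormedSpace 𝕜 F]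
  {V : Type*} [NormedAddCommGroup V] [NormedSpace 𝕜 V]
  {ι : Type*} {l : Filter ι}

theorem exists_leftInverse_forall_eq_zero_of_isIdempotentElem {S' : V →L[𝕜] E} {π : E →L[𝕜] E}
    (hS' : S'.HasLeftInverse) (hπ : IsIdempotentElem π) (hrange : range π = range S') :
    ∃ J : E →L[𝕜] V, Function.LeftInverse J S' ∧ ∀ y, J y = 0 → π y = 0 := by
  obtain ⟨K, hK⟩ := hS'
  refine ⟨K ∘L π, fun a ↦ ?_, fun y hy ↦ ?_⟩
  · obtain ⟨x, hx⟩ : S' a ∈ range π := hrange ▸ mem_range_self a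
    have hfix : π (S' a) = S' a := by rw [← hx]; exact congr($hπ x)
    simpa only [ContinuousLinearMap.comp_apply, hfix] using hK a
  · obtain ⟨a, ha⟩ : π y ∈ range S' := hrange ▸ mem_range_self y
    have ha_zero : a = 0 := by
      rw [← hK a, ha]
      exact hy
    rw [← ha, ha_zero, map_zero]

theorem exists_tendsto_and_eventually_leftInverse_comp_eq [CompleteSpace V]
    {S : V → E} {S' : V →L[𝕜] E} {h₀ : V} {J : E →L[𝕜] V}
    (hS : HasStrictFDerivAt S S' h₀) (hJ : Function.LeftInverse J S') :
    ∃ g : E → V, Tendsto g (𝓝 (S h₀)) (𝓝 h₀) ∧ ∀ᶠ x in 𝓝 (S h₀), J (S (g x)) = J x := by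
  have hJS : HasStrictFDerivAt (J ∘ S) (ContinuousLinearEquiv.refl 𝕜 V : V →L[𝕜] V) h₀ :=
    (J.hasStrictFDerivAt.comp h₀ hS).congr_fderiv (ContinuousLinearMap.ext hJ)
  have hJlim : Tendsto J (𝓝 (S h₀)) (𝓝 (J (S h₀))) := J.continuous.tendsto _
  exact ⟨_, hJS.localInverse_tendsto.comp hJlim, hJlim.eventually hJS.eventually_right_inverse⟩

section TransverseIncrement

variable {G : E → F} {A : E →L[𝕜] F} {T : F →L[𝕜] E} {x₀ : E} {ξ η : ι → E}

theorem isBigO_sub_image_sub_of_hasStrictFDerivAt (hG : HasStrictFDerivAt G A x₀)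
    (hξ : Tendsto ξ l (𝓝 x₀)) (hη : Tendsto η l (𝓝 x₀))
    (hT : ∀ᶠ i in l, T (A (ξ i - η i)) = ξ i - η i) :
    (fun i ↦ ξ i - η i) =O[l] fun i ↦ G (ξ i) - G (η i) := by
  have hrem : (fun i ↦ T (G (ξ i) - G (η i) - A (ξ i - η i))) =o[l] fun i ↦ ξ i - η i :=
    (T.isBigO_comp _ l).trans_isLittleO (hG.isLittleO.comp_tendsto (hξ.prodMk_nhds hη))
  have hsum : (fun i ↦ T (G (ξ i) - G (η i) - A (ξ i - η i)) + (ξ i - η i)) =ᶠ[l]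
      fun i ↦ T (G (ξ i) - G (η i)) := by
    filter_upwards [hT] with i hi
    rw [map_sub T, hi, sub_add_cancel]
  exact (hrem.right_isBigO_add.congr' .rfl hsum).trans (T.isBigO_comp _ l)

theorem isLittleO_image_sub_sub_of_hasStrictFDerivAt (hG : HasStrictFDerivAt G A x₀)
    (hξ : Tendsto ξ l (𝓝 x₀)) (hη : Tendsto η l (𝓝 x₀))
    (hT : ∀ᶠ i in l, T (A (ξ i - η i)) = ξ i - η i) :
    (fun i ↦ G (ξ i) - G (η i) - A (T (G (ξ i) - G (η i)))) =o[l]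
      fun i ↦ G (ξ i) - G (η i) := by
  have hrem : (fun i ↦ G (ξ i) - G (η i) - A (ξ i - η i)) =o[l] fun i ↦ G (ξ i) - G (η i) :=
    (hG.isLittleO.comp_tendsto (hξ.prodMk_nhds hη)).trans_isBigO
      (isBigO_sub_image_sub_of_hasStrictFDerivAt hG hξ hη hT)
  -- `I - A T` annihilates `A (ξ - η)`, so only the remainder contributes.
  refine ((ContinuousLinearMap.isBigO_comp (.id 𝕜 F - A ∘L T) _ l).trans_isLittleO hrem).congr'
    ?_ .rfl
  filter_upwards [hT] with i hi
  change G (ξ i) - G (η i) - A (ξ i - η i) - A (T (G (ξ i) - G (η i) - A (ξ i - η i))) = _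
  rw [map_sub T _ (A _), hi, map_sub A _ (ξ i - η i), sub_sub_sub_cancel_right]

end TransverseIncrement

theorem apply_eq_zero_of_isLittleO_smul [l.NeBot] (B : E →L[𝕜] F) {ε : ι → 𝕜} {q : ι → E} {q₀ : E}
    (hq : Tendsto q l (𝓝 q₀)) (hε : ∀ᶠ i in l, ε i ≠ 0)
    (hB : (fun i ↦ B (ε i • q i)) =o[l] fun i ↦ ε i • q i) : B q₀ = 0 := by
  have hO : (fun i ↦ ε i • q i) =O[l] ε := by
    simpa only [smul_eq_mul, mul_one] using (isBigO_refl ε l).smul (hq.isBigO_one 𝕜)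
  have hlim : Tendsto (fun i ↦ B (q i)) l (𝓝 0) := by
    refine (hB.trans_isBigO hO).tendsto_inv_smul_nhds_zero.congr' ?_
    filter_upwards [hε] with i hi
    rw [map_smul, inv_smul_smul₀ hi]
  exact tendsto_nhds_unique ((B.continuous.tendsto q₀).comp hq) hlim

theorem sub_apply_eq_zero_of_tendsto_perturbed_zeros [CompleteSpace V] [l.NeBot]
    {G : E → F} {A : E →L[𝕜] F} {T : F →L[𝕜] E} {S : V → E} {S' : V →L[𝕜] E} {J : E →L[𝕜] V}
    {h₀ : V} {ξ : ι → E} {ε : ι → 𝕜} {q : ι → F} {q₀ : F}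
    (hG : HasStrictFDerivAt G A (S h₀)) (hS : HasStrictFDerivAt S S' h₀)
    (hGS : ∀ᶠ h in 𝓝 h₀, G (S h) = 0) (hJ : Function.LeftInverse J S')
    (hT : ∀ y, J y = 0 → T (A y) = y) (hξ : Tendsto ξ l (𝓝 (S h₀)))
    (hq : Tendsto q l (𝓝 q₀)) (hε : ∀ᶠ i in l, ε i ≠ 0)
    (hzero : ∀ᶠ i in l, G (ξ i) + ε i • q i = 0) : q₀ - A (T q₀) = 0 := by
  obtain ⟨g, hg, hJg⟩ := exists_tendsto_and_eventually_leftInverse_comp_eq hS hJ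
  have hη : Tendsto (fun i ↦ S (g (ξ i))) l (𝓝 (S h₀)) :=
    hS.continuousAt.tendsto.comp (hg.comp hξ)
  have htransverse : ∀ᶠ i in l, T (A (S (g (ξ i)) - ξ i)) = S (g (ξ i)) - ξ i := by
    filter_upwards [hξ.eventually hJg] with i hi
    exact hT _ (by rw [map_sub, hi, sub_self])
  have hGη : ∀ᶠ i in l, G (S (g (ξ i))) = 0 := (hg.comp hξ).eventually hGS
  have hincr : ∀ᶠ i in l, G (S (g (ξ i))) - G (ξ i) = ε i • q i := by
    filter_upwards [hGη, hzero] with i hi hi'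
    rw [hi, zero_sub, neg_eq_of_add_eq_zero_right hi']
  refine apply_eq_zero_of_isLittleO_smul (.id 𝕜 F - A ∘L T) hq hε ?_
  refine (isLittleO_image_sub_sub_of_hasStrictFDerivAt hG hη hξ htransverse).congr' ?_ hincr
  filter_upwards [hincr] with i hi
  rw [hi]
  rfl

theorem stmt2_general [CompleteSpace V] [l.NeBot]
    {P : E → E} {P' : E →L[𝕜] E} {Q : E → 𝕜 → E} {D : Set 𝕜}
    {S : V → E} {S' : V →L[𝕜] E} {h₀ : V} {π R : E →L[𝕜] E} {ε : ι → 𝕜} {ξ : ι → E}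
    (hP : HasStrictFDerivAt P P' (S h₀))
    (hQ : ContinuousWithinAt (fun p : E × 𝕜 ↦ Q p.1 p.2) (univ ×ˢ D) (S h₀, 0))
    (hS : HasStrictFDerivAt S S' h₀) (hPS : ∀ᶠ h in 𝓝 h₀, P (S h) = S h)
    (hS' : S'.HasLeftInverse) (hπ : IsIdempotentElem π) (hrange : range π = range S')
    (hR : ∀ x ∈ range (ContinuousLinearMap.id 𝕜 E - π),
      R ((ContinuousLinearMap.id 𝕜 E - π) (P' x - x)) = x)
    (hεD : ∀ᶠ i in l, ε i ∈ D) (hε : ∀ᶠ i in l, ε i ≠ 0) (hεlim : Tendsto ε l (𝓝 0))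
    (hξ : Tendsto ξ l (𝓝 (S h₀)))
    (hzero : ∀ᶠ i in l, P (ξ i) - ξ i + ε i • Q (ξ i) (ε i) = 0) :
    Q (S h₀) 0 - (P' (R ((ContinuousLinearMap.id 𝕜 E - π) (Q (S h₀) 0))) -
      R ((ContinuousLinearMap.id 𝕜 E - π) (Q (S h₀) 0))) = 0 := by
  obtain ⟨J, hJ, hJπ⟩ := exists_leftInverse_forall_eq_zero_of_isIdempotentElem hS' hπ hrange
  have hq : Tendsto (fun i ↦ Q (ξ i) (ε i)) l (𝓝 (Q (S h₀) 0)) :=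
    hQ.tendsto.comp (tendsto_nhdsWithin_iff.2
      ⟨hξ.prodMk_nhds hεlim, hεD.mono fun _ hi ↦ ⟨mem_univ _, hi⟩⟩)
  have hT : ∀ y, J y = 0 →
      (R ∘L (.id 𝕜 E - π)) ((P' - ContinuousLinearMap.id 𝕜 E) y) = y := fun y hy ↦
    hR y ⟨y, by simp [hJπ y hy]⟩
  exact sub_apply_eq_zero_of_tendsto_perturbed_zeros (hP.sub (hasStrictFDerivAt_id _)) hS
    (hPS.mono fun _ ↦ sub_eq_zero_of_eq) hJ hT hξ hq hε hzero

end

/- Theorem 2.3 (necessary condition): if F(ξ_n, ε_n) = 0 with ε_n → 0+ and ξ_n → ξ0,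
then M(h0) = (S'(h0))⁻¹ π_{1,h0}[Q(ξ0,0) − (P'(ξ0) − I) R_{h0} π_{2,h0} Q(ξ0,0)] = 0. -/
theorem stmt2
    {E : Type*} [NormedAddCommGroup E] [NormedSpace ℝ E] [CompleteSpace E]
    {k : ℕ} (hk : 1 ≤ k)
    (P : E → E) (P' : E → E →L[ℝ] E)
    (hP : ∀ x, HasFDerivAt P (P' x) x) (hP'cont : Continuous P')
    (Q : E → ℝ → E)
    (hQcont : ContinuousOn (fun p : E × ℝ => Q p.1 p.2) (univ ×ˢ Icc (0:ℝ) 1))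
    (hQlip : ∀ R > (0:ℝ), ∃ L > (0:ℝ), ∀ ε ∈ Icc (0:ℝ) 1, ∀ ξ₁ ξ₂ : E,
      ‖ξ₁‖ ≤ R → ‖ξ₂‖ ≤ R → ‖Q ξ₁ ε - Q ξ₂ ε‖ ≤ L * ‖ξ₁ - ξ₂‖)
    -- (A1)
    (h0 : EuclideanSpace ℝ (Fin k)) (r0 : ℝ) (hr0 : 0 < r0)
    (S : EuclideanSpace ℝ (Fin k) → E)
    (S' : EuclideanSpace ℝ (Fin k) → (EuclideanSpace ℝ (Fin k) →L[ℝ] E))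
    (hS : ∀ h ∈ ball h0 r0, HasFDerivAt S (S' h) h)
    (hS'cont : ContinuousOn S' (ball h0 r0))
    (hA1 : ∀ h ∈ ball h0 r0, P (S h) = S h)
    -- (A2)
    (hA2 : Function.Injective ⇑(S' h0))
    -- (A3)
    (π1 : EuclideanSpace ℝ (Fin k) → E →L[ℝ] E)
    (hproj : ∀ h ∈ ball h0 r0, (π1 h).comp (π1 h) = π1 h)
    (hrange : ∀ h ∈ ball h0 r0, range ⇑(π1 h) = range ⇑(S' h))
    (hπ1cont : ContinuousOn π1 (ball h0 r0))
    -- (A4) together with the local inverses R h and Sinv h on a small ball around h0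
    (ρ : ℝ) (hρ : 0 < ρ) (hρ0 : ρ ≤ r0)
    (R : EuclideanSpace ℝ (Fin k) → (E →L[ℝ] E))
    (hR : ∀ h ∈ ball h0 ρ,
      (∀ x : E, R h x ∈ range ⇑(ContinuousLinearMap.id ℝ E - π1 h)) ∧
      (∀ x ∈ range ⇑(ContinuousLinearMap.id ℝ E - π1 h),
        R h ((ContinuousLinearMap.id ℝ E - π1 h) ((P' (S h)) x - x)) = x) ∧
      (∀ x ∈ range ⇑(ContinuousLinearMap.id ℝ E - π1 h),
        (ContinuousLinearMap.id ℝ E - π1 h) ((P' (S h)) (R h x) - R h x) = x))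
    (Sinv : EuclideanSpace ℝ (Fin k) → E → EuclideanSpace ℝ (Fin k))
    (hSinv : ∀ h ∈ ball h0 ρ, ∀ a, Sinv h (S' h a) = a)
    -- sequences ε_n → 0+, ξ_n → ξ0 with F(ξ_n, ε_n) = 0
    (εs : ℕ → ℝ) (hεs : ∀ n, εs n ∈ Ioc (0:ℝ) 1)
    (hεlim : Tendsto εs atTop (𝓝 0))
    (ξs : ℕ → E) (hξlim : Tendsto ξs atTop (𝓝 (S h0)))
    (hFzero : ∀ n, P (ξs n) - ξs n + εs n • Q (ξs n) (εs n) = 0) :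
    Sinv h0 (π1 h0 (Q (S h0) 0 -
      ((P' (S h0)) (R h0 ((ContinuousLinearMap.id ℝ E - π1 h0) (Q (S h0) 0))) -
        R h0 ((ContinuousLinearMap.id ℝ E - π1 h0) (Q (S h0) 0))))) = 0 := by
  have hball : ball h0 r0 ∈ 𝓝 h0 := ball_mem_nhds h0 hr0
  have hh0 : h0 ∈ ball h0 r0 := mem_ball_self hr0
  have hS'inv : (S' h0).HasLeftInverse :=
    .of_injective_of_isClosed_range_of_closedComplement_range hA2
      (S' h0).range.closed_of_finiteDimensional (.of_finiteDimensional _)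
  have hresidual := stmt2_general
    (hasStrictFDerivAt_of_hasFDerivAt_of_continuousAt (.of_forall hP) hP'cont.continuousAt)
    (hQcont (S h0, 0) ⟨mem_univ _, by simp⟩)
    (hasStrictFDerivAt_of_hasFDerivAt_of_continuousAt (mem_of_superset hball hS)
      (hS'cont.continuousAt hball))
    (mem_of_superset hball hA1) hS'inv (hproj h0 hh0) (hrange h0 hh0)
    (hR h0 (mem_ball_self hρ)).2.1 (.of_forall fun n ↦ Ioc_subset_Icc_self (hεs n))
    (.of_forall fun n ↦ (hεs n).1.ne') hεlim hξlim (.of_forall hFzero)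
  rw [hresidual]
  simpa only [map_zero] using hSinv h0 (mem_ball_self hρ) 0
end

section
/- After possibly diminishing r1 > 0, one has M_ε(h) → M(h) as ε → 0+, uniformly with respect to h ∈ B_{ℝ^k}(h0,r1). -/
open Set Metric Topology Filter

/-!
Since `P (S h) = S h`, the quantity inside `Sinv h ∘ π1 h` is, up to the term `Q`, a difference
quotient of `P - id` at `S h` in the direction `β h ε = O(ε)`. On a compact set of parameters its
linear part converges uniformly because the operators `P' (S h) - id` are uniformly bounded, and its
remainder is uniformly `o(ε)` because strict differentiability at every point of a compact set is
uniform. The maps `Sinv h ∘ π1 h` preserve uniform convergence, being uniformly Lipschitz: a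
continuous family of operators that are bounded below has a common lower bound on a compact set.
-/

open Asymptotics
open scoped NNReal

section UniformConvergence

variable {ι X : Type*} {l : Filter ι} {s : Set X}

theorem tendstoUniformlyOn_iff_tendsto_sub {G : Type*} [AddCommGroup G] [UniformSpace G]
    [IsUniformAddGroup G] {F : ι → X → G} {f : X → G} :
    TendstoUniformlyOn F f l s ↔
      Tendsto (fun q : ι × X => F q.1 q.2 - f q.2) (l ×ˢ 𝓟 s) (𝓝 0) := by
  rw [tendstoUniformlyOn_iff_tendsto, uniformity_eq_comap_nhds_zero, tendsto_comap_iff]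
  rfl

theorem tendstoUniformlyOn_comp_of_isCompact {Y Z : Type*} [UniformSpace Y] [UniformSpace Z]
    {g : Y → Z} {K t : Set Y} (hK : IsCompact K) (hKt : K ⊆ t)
    (hg : ∀ y ∈ K, ContinuousWithinAt g t y) {F : ι → X → Y} {f : X → Y}
    (hF : TendstoUniformlyOn F f l s) (hf : MapsTo f s K) (hFt : ∀ᶠ i in l, MapsTo (F i) s t) :
    TendstoUniformlyOn (fun i x => g (F i x)) (fun x => g (f x)) l s := by
  intro V hV
  have hK' : IsCompact ((↑) ⁻¹' K : Set t) :=
    (Topology.IsInducing.subtypeVal.isCompact_preimage_iff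
      (hKt.trans_eq Subtype.range_coe.symm)).2 hK
  have hV' := hK'.uniformContinuousAt_of_continuousAt (t.domRestrict g)
    (fun y hy => (continuousWithinAt_iff_continuousAt_domRestrict g y.2).1 (hg y hy)) hV
  rw [uniformity_subtype, mem_comap] at hV'
  obtain ⟨U, hU, hUV⟩ := hV'
  filter_upwards [hF U hU, hFt] with i hFU hFit x hx
  exact @hUV (⟨f x, hKt (hf hx)⟩, ⟨F i x, hFit hx⟩) (hFU x hx) (hf hx)

theorem tendstoUniformlyOn_comp_prodMk_of_isCompact {Y Θ Z : Type*} [UniformSpace Y]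
    [UniformSpace Θ] [UniformSpace Z] {g : Y → Θ → Z} {K : Set Y} (hK : IsCompact K) {T : Set Θ}
    (hg : ContinuousOn (fun p : Y × Θ => g p.1 p.2) (univ ×ˢ T)) {θ : ι → Θ} {θ₀ : Θ}
    (hθ₀ : θ₀ ∈ T) (hθ : Tendsto θ l (𝓝[T] θ₀)) {F : ι → X → Y} {f : X → Y}
    (hF : TendstoUniformlyOn F f l s) (hf : MapsTo f s K) :
    TendstoUniformlyOn (fun i x => g (F i x) (θ i)) (fun x => g (f x) θ₀) l s := by
  obtain ⟨hθlim, hθT⟩ := tendsto_nhdsWithin_iff.1 hθ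
  have hpair : TendstoUniformlyOn (fun i x => (F i x, θ i)) (fun x => (f x, θ₀)) l s :=
    fun V hV => (hF.prodMk (hθlim.tendstoUniformlyOn_const s) V hV).diag_of_prod
  have hsub : K ×ˢ {θ₀} ⊆ univ ×ˢ T := prod_mono (subset_univ K) (singleton_subset_iff.2 hθ₀)
  exact tendstoUniformlyOn_comp_of_isCompact (hK.prod isCompact_singleton) hsub
    (fun p hp => hg p (hsub hp)) hpair (fun x hx => ⟨hf hx, rfl⟩)
    (hθT.mono fun i hi x _ => ⟨mem_univ _, hi⟩)

theorem tendstoUniformlyOn_apply_of_lipschitzWith {Y Z : Type*} [PseudoEMetricSpace Y]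
    [PseudoEMetricSpace Z] {g : X → Y → Z} {C : ℝ≥0} (hg : ∀ x ∈ s, LipschitzWith C (g x))
    {F : ι → X → Y} {f : X → Y} (hF : TendstoUniformlyOn F f l s) :
    TendstoUniformlyOn (fun i x => g x (F i x)) (fun x => g x (f x)) l s := by
  have hequi := LipschitzWith.uniformEquicontinuous (fun x : s => g x) C fun x => hg x x.2
  intro V hV
  filter_upwards [hF _ (hequi V hV)] with i hi x hx
  exact hi x hx ⟨x, hx⟩

end UniformConvergence

section CompactOperatorFamilies

variable {𝕜 E F X : Type*} [NontriviallyNormedField 𝕜] [NormedAddCommGroup E] [NormedSpace 𝕜 E]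
  [NormedAddCommGroup F] [NormedSpace 𝕜 F] [TopologicalSpace X] {K : Set X}

theorem exists_lipschitzWith_of_isCompact (hK : IsCompact K) {A : X → E →L[𝕜] F}
    (hA : ContinuousOn A K) : ∃ C : ℝ≥0, ∀ x ∈ K, LipschitzWith C (A x) := by
  obtain ⟨C, hC⟩ := hK.exists_bound_of_continuousOn hA
  refine ⟨C.toNNReal, fun x hx => (A x).lipschitz.weaken ?_⟩
  exact NNReal.coe_le_coe.1 ((hC x hx).trans (Real.le_coe_toNNReal C))

theorem eventually_forall_mul_norm_le {A₀ : E →L[𝕜] F} {c c' : ℝ} (hc : c' < c)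
    (hA₀ : ∀ v, c * ‖v‖ ≤ ‖A₀ v‖) : ∀ᶠ A in 𝓝 A₀, ∀ v, c' * ‖v‖ ≤ ‖A v‖ := by
  filter_upwards [ball_mem_nhds A₀ (sub_pos.2 hc)] with A hA v
  rw [mem_ball_iff_norm'] at hA
  have hdiff : ‖A₀ v‖ - ‖A v‖ ≤ (c - c') * ‖v‖ :=
    calc ‖A₀ v‖ - ‖A v‖ ≤ ‖(A₀ - A) v‖ := norm_sub_norm_le _ _
      _ ≤ (c - c') * ‖v‖ := (A₀ - A).le_of_opNorm_le hA.le v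
  linarith [hA₀ v]

theorem exists_pos_forall_mul_norm_le_of_isCompact (hK : IsCompact K) {A : X → E →L[𝕜] F}
    (hA : ContinuousOn A K) (hbelow : ∀ x ∈ K, ∃ c > 0, ∀ v, c * ‖v‖ ≤ ‖A x v‖) :
    ∃ c > 0, ∀ x ∈ K, ∀ v, c * ‖v‖ ≤ ‖A x v‖ := by
  refine hK.induction_on (p := fun t => ∃ c > 0, ∀ x ∈ t, ∀ v, c * ‖v‖ ≤ ‖A x v‖)
    ⟨1, one_pos, by simp⟩ ?mono ?union ?nhds
  case mono =>
    rintro t t' htt' ⟨c, hc, hct'⟩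
    exact ⟨c, hc, fun x hx => hct' x (htt' hx)⟩
  case union =>
    rintro t t' ⟨c, hc, hct⟩ ⟨c', hc', hct'⟩
    refine ⟨min c c', lt_min hc hc', ?_⟩
    rintro x (hx | hx) v
    · exact (mul_le_mul_of_nonneg_right (min_le_left c c') (norm_nonneg v)).trans (hct x hx v)
    · exact (mul_le_mul_of_nonneg_right (min_le_right c c') (norm_nonneg v)).trans (hct' x hx v)
  case nhds =>
    intro x hx
    obtain ⟨c, hc, hcx⟩ := hbelow x hx
    exact ⟨_, (hA x hx).eventually (eventually_forall_mul_norm_le (half_lt_self hc) hcx),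
      c / 2, half_pos hc, fun y hy => hy⟩

theorem exists_antilipschitzWith_of_isCompact (hK : IsCompact K) {A : X → E →L[𝕜] F}
    (hA : ContinuousOn A K) (hanti : ∀ x ∈ K, ∃ C : ℝ≥0, AntilipschitzWith C (A x)) :
    ∃ C : ℝ≥0, ∀ x ∈ K, AntilipschitzWith C (A x) := by
  have hbelow : ∀ x ∈ K, ∃ c > 0, ∀ v, c * ‖v‖ ≤ ‖A x v‖ := fun x hx =>
    antilipschitzWith_iff_exists_mul_le_norm.1 (hanti x hx)
  obtain ⟨c, hc, hcA⟩ := exists_pos_forall_mul_norm_le_of_isCompact hK hA hbelow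
  refine ⟨⟨c⁻¹, by positivity⟩, fun x hx => (A x).antilipschitz_of_bound fun v => ?_⟩
  exact (le_inv_mul_iff₀ hc).2 (hcA x hx v)

theorem exists_lipschitzWith_leftInverse_comp_of_isCompact {G : Type*} [NormedAddCommGroup G]
    [NormedSpace 𝕜 G] (hK : IsCompact K) {A : X → E →L[𝕜] F} (hA : ContinuousOn A K)
    (hanti : ∀ x ∈ K, ∃ C : ℝ≥0, AntilipschitzWith C (A x)) {g : X → F → E}
    (hg : ∀ x ∈ K, Function.LeftInverse (g x) (A x)) {π : X → G →L[𝕜] F} (hπ : ContinuousOn π K)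
    (hrange : ∀ x ∈ K, range (π x) ⊆ range (A x)) :
    ∃ C : ℝ≥0, ∀ x ∈ K, LipschitzWith C fun y => g x (π x y) := by
  obtain ⟨C, hC⟩ := exists_antilipschitzWith_of_isCompact hK hA hanti
  obtain ⟨D, hD⟩ := exists_lipschitzWith_of_isCompact hK hπ
  refine ⟨C * D, fun x hx => ?_⟩
  have hinv : RightInvOn (g x) (A x) (range (A x)) := by
    rintro _ ⟨v, rfl⟩
    rw [hg x hx v]
  have hgC : LipschitzOnWith C (g x) (range (A x)) :=
    lipschitzOnWith_iff_restrict.2 ((hC x hx).to_rightInvOn hinv)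
  exact lipschitzOnWith_univ.1 <|
    hgC.comp (hD x hx).lipschitzOnWith fun y _ => hrange x hx (mem_range_self y)

end CompactOperatorFamilies

section UniformDifferentiability

variable {𝕜 E F : Type*} [NontriviallyNormedField 𝕜] [NormedAddCommGroup E] [NormedSpace 𝕜 E]
  [NormedAddCommGroup F] [NormedSpace 𝕜 F] {f : E → F} {f' : E → E →L[𝕜] F} {K : Set E}

theorem eventually_norm_sub_sub_fderiv_le {x : E} (hf : HasStrictFDerivAt f (f' x) x)
    (hf' : ContinuousWithinAt f' K x) {c : ℝ} (hc : 0 < c) :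
    ∀ᶠ z : E × E in 𝓝 (0, x), z.2 ∈ K →
      ‖f (z.1 + z.2) - f z.2 - f' z.2 z.1‖ ≤ c * ‖z.1‖ := by
  have hshift : Tendsto (fun z : E × E => (z.1 + z.2, z.2)) (𝓝 (0, x)) (𝓝 (x, x)) :=
    Continuous.tendsto' (by fun_prop) _ _ (by simp)
  have hstrict := hshift.eventually (hf.isLittleO.def (half_pos hc))
  have hclose : ∀ᶠ y in 𝓝 x, y ∈ K → ‖f' x - f' y‖ < c / 2 := by
    simpa only [mem_ball_iff_norm'] using eventually_nhdsWithin_iff.1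
      (hf'.eventually_mem (ball_mem_nhds (f' x) (half_pos hc)))
  filter_upwards [hstrict, continuous_snd.continuousAt.eventually hclose] with z hz hz' hzK
  rw [add_sub_cancel_right] at hz
  calc ‖f (z.1 + z.2) - f z.2 - f' z.2 z.1‖
      = ‖(f (z.1 + z.2) - f z.2 - f' x z.1) + (f' x - f' z.2) z.1‖ := by
        rw [sub_apply, sub_add_sub_cancel]
    _ ≤ c / 2 * ‖z.1‖ + c / 2 * ‖z.1‖ :=
        norm_add_le_of_le hz ((f' x - f' z.2).le_of_opNorm_le (hz' hzK).le z.1)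
    _ = c * ‖z.1‖ := by ring

theorem isLittleO_sub_sub_fderiv_of_isCompact (hK : IsCompact K)
    (hf : ∀ x ∈ K, HasStrictFDerivAt f (f' x) x) (hf' : ContinuousOn f' K) :
    (fun z : E × E => f (z.1 + z.2) - f z.2 - f' z.2 z.1) =o[𝓝 0 ×ˢ 𝓟 K] Prod.fst := by
  refine isLittleO_iff.2 fun c hc => eventually_prod_principal_iff.2 ?_
  have hlocal := hK.eventually_forall_of_forall_eventually
    (P := fun v x => x ∈ K → ‖f (v + x) - f x - f' x v‖ ≤ c * ‖v‖) fun x hx =>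
    eventually_norm_sub_sub_fderiv_le (hf x hx) (hf' x hx) hc
  exact hlocal.mono fun v hv x hx => hv x hx hx

theorem tendstoUniformlyOn_inv_smul_sub_sub_fderiv {ι X : Type*} {l : Filter ι} {s : Set X}
    (hK : IsCompact K) (hf : ∀ x ∈ K, HasStrictFDerivAt f (f' x) x) (hf' : ContinuousOn f' K)
    {x : X → E} (hx : MapsTo x s K) {v : ι → X → E} {c : ι → 𝕜} (hc : Tendsto c l (𝓝 0))
    (hv : (fun q : ι × X => v q.1 q.2) =O[l ×ˢ 𝓟 s] fun q => c q.1) :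
    TendstoUniformlyOn
      (fun i a => (c i)⁻¹ • (f (v i a + x a) - f (x a) - f' (x a) (v i a))) 0 l s := by
  have hv0 : Tendsto (fun q : ι × X => v q.1 q.2) (l ×ˢ 𝓟 s) (𝓝 0) :=
    hv.trans_tendsto (hc.comp tendsto_fst)
  have hxK : Tendsto (fun q : ι × X => x q.2) (l ×ˢ 𝓟 s) (𝓟 K) :=
    (tendsto_principal_principal.2 hx).comp tendsto_snd
  have hrem := ((isLittleO_sub_sub_fderiv_of_isCompact hK hf hf').comp_tendsto
    (hv0.prodMk hxK)).trans_isBigO hv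
  rw [tendstoUniformlyOn_iff_tendsto_sub]
  simpa using hrem.tendsto_inv_smul_nhds_zero

end UniformDifferentiability

-- In the notation of the paper, `A h = S'(h)` and `w h = R_h π_{2,h} Q(S(h),0)`.
theorem stmt3_general {E F X : Type*} [NormedAddCommGroup E] [NormedSpace ℝ E]
    [NormedAddCommGroup F] [NormedSpace ℝ F] [TopologicalSpace X] {K : Set X} (hK : IsCompact K)
    {P : E → E} {P' : E → E →L[ℝ] E} {Q : E → ℝ → E} {S : X → E} (hS : ContinuousOn S K)
    (hP : ∀ x ∈ S '' K, HasStrictFDerivAt P (P' x) x) (hP' : ContinuousOn P' (S '' K))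
    (hQ : ContinuousOn (fun p : E × ℝ => Q p.1 p.2) (univ ×ˢ Icc 0 1))
    (hfix : ∀ h ∈ K, P (S h) = S h)
    {A : X → F →L[ℝ] E} (hA : ContinuousOn A K)
    (hanti : ∀ h ∈ K, ∃ C : ℝ≥0, AntilipschitzWith C (A h))
    {Ainv : X → E → F} (hAinv : ∀ h ∈ K, Function.LeftInverse (Ainv h) (A h))
    {π : X → E →L[ℝ] E} (hπ : ContinuousOn π K) (hrange : ∀ h ∈ K, range (π h) ⊆ range (A h))
    {β : X → ℝ → E} {M : ℝ} (hβ : ∀ᶠ ε in 𝓝[>] 0, ∀ h ∈ K, ‖β h ε‖ ≤ M * ε)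
    {w : X → E}
    (hβlim : TendstoUniformlyOn (fun ε h => ε⁻¹ • β h ε) (fun h => -w h) (𝓝[>] 0) K) :
    TendstoUniformlyOn
      (fun ε h => Ainv h (π h (ε⁻¹ • (P' (S h) (β h ε) - β h ε) +
        ε⁻¹ • (P (β h ε + S h) - S h - P' (S h) (β h ε)) + Q (β h ε + S h) ε)))
      (fun h => Ainv h (π h (Q (S h) 0 - (P' (S h) (w h) - w h)))) (𝓝[>] 0) K := by
  have hε0 : Tendsto (fun ε : ℝ => ε) (𝓝[>] 0) (𝓝 0) := nhdsWithin_le_nhds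
  have hβO : (fun q : ℝ × X => β q.2 q.1) =O[𝓝[>] 0 ×ˢ 𝓟 K] fun q => q.1 := by
    refine IsBigO.of_bound M (eventually_prod_principal_iff.2 ?_)
    filter_upwards [hβ, self_mem_nhdsWithin] with ε hε hεpos h hh
    rw [Real.norm_of_nonneg (le_of_lt hεpos)]
    exact hε h hh
  have hβS : TendstoUniformlyOn (fun ε h => β h ε + S h) S (𝓝[>] 0) K := by
    rw [tendstoUniformlyOn_iff_tendsto_sub]
    simpa only [add_sub_cancel_right] using hβO.trans_tendsto (hε0.comp tendsto_fst)
  have hSK : IsCompact (S '' K) := hK.image_of_continuousOn hS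
  have hlinear : TendstoUniformlyOn (fun ε h => ε⁻¹ • (P' (S h) (β h ε) - β h ε))
      (fun h => -(P' (S h) (w h) - w h)) (𝓝[>] 0) K := by
    have hcont : ContinuousOn (fun h => P' (S h) - ContinuousLinearMap.id ℝ E) K :=
      (hP'.comp hS (mapsTo_image S K)).sub continuousOn_const
    obtain ⟨C, hC⟩ := exists_lipschitzWith_of_isCompact hK hcont
    simpa only [sub_apply, ContinuousLinearMap.id_apply, map_smul, map_neg, smul_sub, neg_sub,
      neg_sub_neg] using tendstoUniformlyOn_apply_of_lipschitzWith hC hβlim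
  have hremainder : TendstoUniformlyOn
      (fun ε h => ε⁻¹ • (P (β h ε + S h) - S h - P' (S h) (β h ε))) 0 (𝓝[>] 0) K := by
    refine (tendstoUniformlyOn_inv_smul_sub_sub_fderiv hSK hP hP' (mapsTo_image S K)
      (v := fun ε h => β h ε) hε0 hβO).congr (.of_forall fun ε h hh => ?_)
    simp only [hfix h hh]
  have hperturbation : TendstoUniformlyOn (fun ε h => Q (β h ε + S h) ε) (fun h => Q (S h) 0)
      (𝓝[>] 0) K := by
    refine tendstoUniformlyOn_comp_prodMk_of_isCompact hSK hQ (by simp) ?_ hβS (mapsTo_image S K)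
    exact tendsto_nhdsWithin_iff.2
      ⟨hε0, mem_of_superset (Ioc_mem_nhdsGT one_pos) Ioc_subset_Icc_self⟩
  obtain ⟨C, hC⟩ := exists_lipschitzWith_leftInverse_comp_of_isCompact hK hA hanti hAinv hπ hrange
  have hsum := tendstoUniformlyOn_apply_of_lipschitzWith hC
    ((hlinear.add hremainder).add hperturbation)
  refine hsum.congr_right fun h _ => ?_
  simp only [Pi.add_apply, add_zero, neg_add_eq_sub]

/- Convergence M_ε → M as ε → 0+, uniformly on a (possibly diminished) ball around h0.
Here M_ε(h) = (S'(h))⁻¹ π_{1,h}[(P'(S(h)) − I)β(h,ε)/ε + o_h(β(h,ε))/ε + Q(β(h,ε)+S(h),ε)]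
with o_h(β) = P(β+S(h)) − S(h) − P'(S(h))β, and
M(h) = (S'(h))⁻¹ π_{1,h}[Q(S(h),0) − (P'(S(h)) − I) R_h π_{2,h} Q(S(h),0)]. -/
theorem stmt3
    {E : Type*} [NormedAddCommGroup E] [NormedSpace ℝ E] [CompleteSpace E]
    {k : ℕ} (hk : 1 ≤ k)
    (P : E → E) (P' : E → E →L[ℝ] E)
    (hP : ∀ x, HasFDerivAt P (P' x) x) (hP'cont : Continuous P')
    (Q : E → ℝ → E)
    (hQcont : ContinuousOn (fun p : E × ℝ => Q p.1 p.2) (univ ×ˢ Icc (0:ℝ) 1))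
    (hQlip : ∀ R > (0:ℝ), ∃ L > (0:ℝ), ∀ ε ∈ Icc (0:ℝ) 1, ∀ ξ₁ ξ₂ : E,
      ‖ξ₁‖ ≤ R → ‖ξ₂‖ ≤ R → ‖Q ξ₁ ε - Q ξ₂ ε‖ ≤ L * ‖ξ₁ - ξ₂‖)
    -- (A1)
    (h0 : EuclideanSpace ℝ (Fin k)) (r0 : ℝ) (hr0 : 0 < r0)
    (S : EuclideanSpace ℝ (Fin k) → E)
    (S' : EuclideanSpace ℝ (Fin k) → (EuclideanSpace ℝ (Fin k) →L[ℝ] E))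
    (hS : ∀ h ∈ ball h0 r0, HasFDerivAt S (S' h) h)
    (hS'cont : ContinuousOn S' (ball h0 r0))
    (hA1 : ∀ h ∈ ball h0 r0, P (S h) = S h)
    -- (A2)
    (hA2 : Function.Injective ⇑(S' h0))
    -- (A3)
    (π1 : EuclideanSpace ℝ (Fin k) → E →L[ℝ] E)
    (hproj : ∀ h ∈ ball h0 r0, (π1 h).comp (π1 h) = π1 h)
    (hrange : ∀ h ∈ ball h0 r0, range ⇑(π1 h) = range ⇑(S' h))
    (hπ1cont : ContinuousOn π1 (ball h0 r0))
    -- (A4) together with the local inverses R h and Sinv h on the ball of radius r1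
    (r1 : ℝ) (hr1 : 0 < r1) (hr1r0 : r1 < r0)
    (R : EuclideanSpace ℝ (Fin k) → (E →L[ℝ] E))
    (hR : ∀ h ∈ ball h0 r1,
      (∀ x : E, R h x ∈ range ⇑(ContinuousLinearMap.id ℝ E - π1 h)) ∧
      (∀ x ∈ range ⇑(ContinuousLinearMap.id ℝ E - π1 h),
        R h ((ContinuousLinearMap.id ℝ E - π1 h) ((P' (S h)) x - x)) = x) ∧
      (∀ x ∈ range ⇑(ContinuousLinearMap.id ℝ E - π1 h),
        (ContinuousLinearMap.id ℝ E - π1 h) ((P' (S h)) (R h x) - R h x) = x))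
    (Sinv : EuclideanSpace ℝ (Fin k) → E → EuclideanSpace ℝ (Fin k))
    (hSinv : ∀ h ∈ ball h0 r1, ∀ a, Sinv h (S' h a) = a)
    -- the function β from the Lyapunov-Schmidt reduction
    (β : EuclideanSpace ℝ (Fin k) → ℝ → E) (Mc : ℝ) (hMc : 0 < Mc)
    (hβcont : ∀ ε ∈ Icc (0:ℝ) r1, ContinuousOn (fun h => β h ε) (ball h0 r1))
    (hβmem : ∀ h ∈ ball h0 r1, ∀ ε ∈ Icc (0:ℝ) r1,
      β h ε ∈ range ⇑(ContinuousLinearMap.id ℝ E - π1 h))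
    (hβbd : ∀ h ∈ ball h0 r1, ∀ ε ∈ Icc (0:ℝ) r1, ‖β h ε‖ ≤ Mc * ε)
    (hβeq : ∀ h ∈ ball h0 r1, ∀ ε ∈ Icc (0:ℝ) r1,
      (ContinuousLinearMap.id ℝ E - π1 h)
        (P (β h ε + S h) - (β h ε + S h) + ε • Q (β h ε + S h) ε) = 0)
    (hβlim : TendstoUniformlyOn (fun ε h => ε⁻¹ • β h ε)
      (fun h => -(R h ((ContinuousLinearMap.id ℝ E - π1 h) (Q (S h) 0))))
      (𝓝[>] (0:ℝ)) (ball h0 r1)) :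
    ∃ r1' : ℝ, 0 < r1' ∧ r1' ≤ r1 ∧
      TendstoUniformlyOn
        (fun ε h => Sinv h (π1 h
          (ε⁻¹ • ((P' (S h)) (β h ε) - β h ε) +
            ε⁻¹ • (P (β h ε + S h) - S h - (P' (S h)) (β h ε)) +
            Q (β h ε + S h) ε)))
        (fun h => Sinv h (π1 h (Q (S h) 0 -
          ((P' (S h)) (R h ((ContinuousLinearMap.id ℝ E - π1 h) (Q (S h) 0))) -
            R h ((ContinuousLinearMap.id ℝ E - π1 h) (Q (S h) 0))))))
        (𝓝[>] (0:ℝ)) (ball h0 r1') := by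
  have hK1 : closedBall h0 (r1 / 2) ⊆ ball h0 r1 := closedBall_subset_ball (half_lt_self hr1)
  have hK0 : closedBall h0 (r1 / 2) ⊆ ball h0 r0 := hK1.trans (ball_subset_ball hr1r0.le)
  have hanti : ∀ h ∈ closedBall h0 (r1 / 2), ∃ C : ℝ≥0, AntilipschitzWith C (S' h) := fun h hh =>
    ((S' h).injective_iff_antilipschitz.1 (Function.LeftInverse.injective (hSinv h (hK1 hh)))).imp
      fun _ => And.right
  have hβsmall : ∀ᶠ ε in 𝓝[>] 0, ∀ h ∈ closedBall h0 (r1 / 2), ‖β h ε‖ ≤ Mc * ε := by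
    filter_upwards [Ioc_mem_nhdsGT hr1] with ε hε h hh
    exact hβbd h (hK1 hh) ε ⟨hε.1.le, hε.2⟩
  have hlim := stmt3_general (isCompact_closedBall h0 (r1 / 2))
    (fun h hh => (hS h (hK0 hh)).continuousAt.continuousWithinAt)
    (fun _ _ => hasStrictFDerivAt_of_hasFDerivAt_of_continuousAt (.of_forall hP)
      hP'cont.continuousAt)
    hP'cont.continuousOn hQcont (fun h hh => hA1 h (hK0 hh)) (hS'cont.mono hK0) hanti
    (fun h hh => hSinv h (hK1 hh)) (hπ1cont.mono hK0) (fun h hh => (hrange h (hK0 hh)).le)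
    hβsmall (hβlim.mono hK1)
  exact ⟨r1 / 2, half_pos hr1, half_le_self hr1.le, hlim.mono ball_subset_closedBall⟩
end

section
/- For all ξ1, ξ2, ζ1, ζ2 ∈ E one has ‖Ψ(ξ2) − Ψ(ξ1) − Ψ(ζ2) + Ψ(ζ1)‖ ≤ sup_{0 ≤ θ ≤ 1} ‖Ψ'(ζ2 + θ(ξ2 − ζ2))‖ · ‖ξ2 − ξ1 − ζ2 + ζ1‖ + L · max{‖ξ2 − ξ1‖, ‖ζ2 − ζ1‖} · ‖ξ1 − ζ1‖. -/
open Set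

/-!
The difference of the maps `t ↦ Ψ (ζ₂ + t (ξ₂ - ζ₂))` and `t ↦ Ψ (ζ₁ + t (ξ₁ - ζ₁))`, taken between
`t = 0` and `t = 1`, is the four-point expression. By the mean value inequality it is enough to
bound the derivative of this difference at each `t`. With `a` and `b` the points at time `t` on the
two segments, this derivative is
`Ψ' a (ξ₂ - ζ₂) - Ψ' b (ξ₁ - ζ₁) = Ψ' a (ξ₂ - ξ₁ - ζ₂ + ζ₁) + (Ψ' a - Ψ' b) (ξ₁ - ζ₁)`,
and convexity of the norm bounds `‖a - b‖` by its values at the two ends.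
-/

section OperatorNorm

variable {𝕜 E F : Type*} [NontriviallyNormedField 𝕜] [SeminormedAddCommGroup E] [NormedSpace 𝕜 E]
  [SeminormedAddCommGroup F] [NormedSpace 𝕜 F]

theorem norm_apply_sub_apply_le (A B : E →L[𝕜] F) (u v : E) :
    ‖A u - B v‖ ≤ ‖A‖ * ‖u - v‖ + ‖A - B‖ * ‖v‖ :=
  calc ‖A u - B v‖ = ‖A (u - v) + (A - B) v‖ := by simp
    _ ≤ ‖A (u - v)‖ + ‖(A - B) v‖ := norm_add_le _ _
    _ ≤ ‖A‖ * ‖u - v‖ + ‖A - B‖ * ‖v‖ := add_le_add (A.le_opNorm _) ((A - B).le_opNorm _)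

end OperatorNorm

section Segment

theorem norm_lineMap_sub_lineMap_le_max {E : Type*} [SeminormedAddCommGroup E] [NormedSpace ℝ E]
    (a b c d : E) {t : ℝ} (ht : t ∈ Icc (0 : ℝ) 1) :
    ‖AffineMap.lineMap a b t - AffineMap.lineMap c d t‖ ≤ max ‖a - c‖ ‖b - d‖ := by
  have hsub : AffineMap.lineMap a b t - AffineMap.lineMap c d t
      = AffineMap.lineMap (a - c) (b - d) t :=
    AffineMap.lineMap_vsub_lineMap a b c d t
  rw [hsub]
  exact convexOn_univ_norm.le_max_of_mem_segment (mem_univ _) (mem_univ _)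
    (lineMap_mem_segment ℝ _ _ ht)

theorem bddAbove_range_norm_comp_lineMap {E G : Type*} [AddCommGroup E] [TopologicalSpace E]
    [IsTopologicalAddGroup E] [Module ℝ E] [ContinuousSMul ℝ E] [SeminormedAddCommGroup G]
    {s : Set E} {g : E → G} (hs : Convex ℝ s) (hg : ContinuousOn g s) {a b : E} (ha : a ∈ s)
    (hb : b ∈ s) : BddAbove (range fun θ : Icc (0 : ℝ) 1 => ‖g (AffineMap.lineMap a b (θ : ℝ))‖) :=
  (isCompact_range (hg.comp_continuous
    (AffineMap.lineMap_continuous.comp continuous_subtype_val)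
    fun θ => hs.lineMap_mem ha hb θ.2).norm).bddAbove

theorem norm_apply_lineMap_sub_apply_lineMap_le {E F : Type*} [SeminormedAddCommGroup E]
    [NormedSpace ℝ E] [SeminormedAddCommGroup F] [NormedSpace ℝ F] {s : Set E}
    {A : E → E →L[ℝ] F} {L : NNReal} (hs : Convex ℝ s) (hlip : LipschitzOnWith L A s)
    {a b c d : E} (ha : a ∈ s) (hb : b ∈ s) (hc : c ∈ s) (hd : d ∈ s) {t : ℝ}
    (ht : t ∈ Icc (0 : ℝ) 1) :
    ‖A (AffineMap.lineMap a b t) (b - a) - A (AffineMap.lineMap c d t) (d - c)‖ ≤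
      ‖A (AffineMap.lineMap a b t)‖ * ‖(b - a) - (d - c)‖ +
        L * max ‖b - d‖ ‖a - c‖ * ‖d - c‖ := by
  refine (norm_apply_sub_apply_le _ _ _ _).trans ?_
  gcongr
  calc ‖A (AffineMap.lineMap a b t) - A (AffineMap.lineMap c d t)‖
      ≤ L * ‖AffineMap.lineMap a b t - AffineMap.lineMap c d t‖ :=
        hlip.norm_sub_le (hs.lineMap_mem ha hb ht) (hs.lineMap_mem hc hd ht)
    _ ≤ L * max ‖b - d‖ ‖a - c‖ := by
        rw [max_comm]
        gcongr
        exact norm_lineMap_sub_lineMap_le_max a b c d ht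

end Segment

section MeanValue

variable {E F G : Type*} [NormedAddCommGroup E] [NormedSpace ℝ E] [NormedAddCommGroup F]
  [NormedSpace ℝ F] [NormedAddCommGroup G] [NormedSpace ℝ G] {s : Set E} {f : E → F}

theorem hasDerivWithinAt_comp_lineMap {f' : E →L[ℝ] F} (hs : Convex ℝ s) {a b : E} (ha : a ∈ s)
    (hb : b ∈ s) {t : ℝ} (hf : HasFDerivWithinAt f f' s (AffineMap.lineMap a b t)) :
    HasDerivWithinAt (fun t : ℝ => f (AffineMap.lineMap a b t)) (f' (b - a)) (Icc 0 1) t :=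
  hf.comp_hasDerivWithinAt t AffineMap.hasDerivWithinAt_lineMap (hs.mapsTo_lineMap ha hb)

theorem norm_image_sub_sub_image_sub_le_of_norm_deriv_lineMap_le {f' : E → E →L[ℝ] F} {u : Set G}
    {g : G → F} {g' : G → G →L[ℝ] F} (hs : Convex ℝ s) (hu : Convex ℝ u)
    (hf : ∀ x ∈ s, HasFDerivWithinAt f (f' x) s x) (hg : ∀ x ∈ u, HasFDerivWithinAt g (g' x) u x)
    {a b : E} {c d : G} (ha : a ∈ s) (hb : b ∈ s) (hc : c ∈ u) (hd : d ∈ u) {C : ℝ}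
    (bound : ∀ t ∈ Icc (0 : ℝ) 1,
      ‖f' (AffineMap.lineMap a b t) (b - a) - g' (AffineMap.lineMap c d t) (d - c)‖ ≤ C) :
    ‖(f b - f a) - (g d - g c)‖ ≤ C := by
  have mean_value := norm_image_sub_le_of_norm_deriv_le_segment_01'
    (fun t ht => (hasDerivWithinAt_comp_lineMap hs ha hb (hf _ (hs.lineMap_mem ha hb ht))).sub
      (hasDerivWithinAt_comp_lineMap hu hc hd (hg _ (hu.lineMap_mem hc hd ht))))
    (fun t ht => bound t (Ico_subset_Icc_self ht))
  simpa [sub_sub_sub_comm] using mean_value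

theorem stmt6_general {f' : E → E →L[ℝ] F} {L : NNReal} (hs : Convex ℝ s)
    (hf : ∀ x ∈ s, HasFDerivWithinAt f (f' x) s x) (hlip : LipschitzOnWith L f' s)
    {ξ₁ ξ₂ ζ₁ ζ₂ : E} (hξ₁ : ξ₁ ∈ s) (hξ₂ : ξ₂ ∈ s) (hζ₁ : ζ₁ ∈ s) (hζ₂ : ζ₂ ∈ s) :
    ‖f ξ₂ - f ξ₁ - f ζ₂ + f ζ₁‖ ≤
      (⨆ θ : Icc (0 : ℝ) 1, ‖f' (ζ₂ + (θ : ℝ) • (ξ₂ - ζ₂))‖) * ‖ξ₂ - ξ₁ - ζ₂ + ζ₁‖ +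
        L * max ‖ξ₂ - ξ₁‖ ‖ζ₂ - ζ₁‖ * ‖ξ₁ - ζ₁‖ := by
  have lineMap_eq (θ : ℝ) : ζ₂ + θ • (ξ₂ - ζ₂) = AffineMap.lineMap ζ₂ ξ₂ θ := by
    rw [AffineMap.lineMap_apply_module', add_comm]
  have regroup_image : f ξ₂ - f ξ₁ - f ζ₂ + f ζ₁ = (f ξ₂ - f ζ₂) - (f ξ₁ - f ζ₁) := by abel
  have regroup : ξ₂ - ξ₁ - ζ₂ + ζ₁ = (ξ₂ - ζ₂) - (ξ₁ - ζ₁) := by abel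
  simp only [lineMap_eq, regroup_image, regroup]
  refine norm_image_sub_sub_image_sub_le_of_norm_deriv_lineMap_le hs hs hf hf hζ₂ hξ₂ hζ₁ hξ₁
    fun t ht => (norm_apply_lineMap_sub_apply_lineMap_le hs hlip hζ₂ hξ₂ hζ₁ hξ₁ ht).trans ?_
  gcongr
  exact le_ciSup (bddAbove_range_norm_comp_lineMap hs hlip.continuousOn hζ₂ hξ₂) ⟨t, ht⟩

end MeanValue

/- The four-point mean value type estimate for a differentiable map Ψ with Lipschitz
derivative (inequality (3.7) in the paper). -/
theorem stmt6
    {E : Type*} [NormedAddCommGroup E] [NormedSpace ℝ E]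
    (Ψ : E → E) (Ψ' : E → E →L[ℝ] E)
    (hderiv : ∀ x, HasFDerivAt Ψ (Ψ' x) x)
    (L : ℝ) (hL : 0 < L)
    (hlip : ∀ x y : E, ‖Ψ' x - Ψ' y‖ ≤ L * ‖x - y‖)
    (ξ₁ ξ₂ ζ₁ ζ₂ : E) :
    ‖Ψ ξ₂ - Ψ ξ₁ - Ψ ζ₂ + Ψ ζ₁‖ ≤
      (⨆ θ : Icc (0:ℝ) 1, ‖Ψ' (ζ₂ + (θ : ℝ) • (ξ₂ - ζ₂))‖) * ‖ξ₂ - ξ₁ - ζ₂ + ζ₁‖ +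
        L * max ‖ξ₂ - ξ₁‖ ‖ζ₂ - ζ₁‖ * ‖ξ₁ - ζ₁‖ := by
  exact stmt6_general (L := ⟨L, hL.le⟩) convex_univ (fun x _ => (hderiv x).hasFDerivWithinAt)
    (.of_dist_le_mul fun x _ y _ => by rw [dist_eq_norm, dist_eq_norm]; exact hlip x y)
    (mem_univ ξ₁) (mem_univ ξ₂) (mem_univ ζ₁) (mem_univ ζ₂)
end
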